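/- For every k ≥ 2, if L_k denotes the limit of minS_k(n)/n as n → ∞, then L_k ≥ minS_k(n)/n for every n ≥ 1. -/

import Mathlib

open List Real

/-- `occ w u` is the number of occurrences of `u` as a subword (subsequence) of `w`,
i.e. the multiplicity of `u` among the `2^|w|` sublists of `w`. -/
def occ {α : Type*} [DecidableEq α] (w u : List α) : ℕ := w.sublists.count u

/-- `maxocc w` is the maximal number of occurrences of any subword of `w`. -/
noncomputable def maxocc {α : Type*} [DecidableEq α] (w : List α) : ℕ :=
  sSup {n : ℕ | ∃ u : List α, occ w u = n}

/-- `minS k n` is the minimal subword entropy `log₂ (maxocc w)` over words `w`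
of length `n` over the alphabet `Fin k`. -/
noncomputable def minS (k n : ℕ) : ℝ :=
  sInf {s : ℝ | ∃ w : List (Fin k), w.length = n ∧ s = Real.logb 2 (maxocc w)}

/-!
Concatenating an occurrence of `u₁` in `w₁` with an occurrence of `u₂` in `w₂` gives an occurrence
of `u₁ ++ u₂` in `w₁ ++ w₂`, so the subword entropy is superadditive under concatenation. Cutting
an arbitrary word of length `m + n` after `m` letters then shows that `minS k` is superadditive in
the length, and by Fekete's lemma the limit of `minS k n / n` is its supremum.
-/

open Filter Topology

lemma count_mul_count_le_count_flatMap {α β : Type*} [BEq α] [LawfulBEq α] [BEq β]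
    (l : List α) (f : α → List β) (a : α) (b : β) :
    l.count a * (f a).count b ≤ (l.flatMap f).count b := by
  have hsub : replicate (l.count a) a <+ l := replicate_sublist_iff.2 le_rfl
  calc l.count a * (f a).count b
      = ((replicate (l.count a) a).flatMap f).count b := by
        rw [count_flatMap, map_replicate, sum_replicate, smul_eq_mul, Function.comp_apply]
    _ ≤ (l.flatMap f).count b := (hsub.flatMap f).count_le b

section Words

variable {α : Type*} [DecidableEq α]

lemma occ_mul_occ_le_occ_append (w₁ w₂ u₁ u₂ : List α) :
    occ w₁ u₁ * occ w₂ u₂ ≤ occ (w₁ ++ w₂) (u₁ ++ u₂) := by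
  have hmap : (w₁.sublists.map (· ++ u₂)).count (u₁ ++ u₂) = occ w₁ u₁ :=
    count_map_of_injective _ (· ++ u₂) (append_left_injective u₂) u₁
  calc occ w₁ u₁ * occ w₂ u₂
      = w₂.sublists.count u₂ * (w₁.sublists.map (· ++ u₂)).count (u₁ ++ u₂) := by
        rw [hmap, mul_comm, occ]
    _ ≤ (w₂.sublists.flatMap fun x => w₁.sublists.map (· ++ x)).count (u₁ ++ u₂) :=
        count_mul_count_le_count_flatMap _ (fun x => w₁.sublists.map (· ++ x)) _ _
    _ = occ (w₁ ++ w₂) (u₁ ++ u₂) := by rw [occ, sublists_append, bind_eq_flatMap]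

lemma bddAbove_occ (w : List α) : BddAbove {n : ℕ | ∃ u : List α, occ w u = n} := by
  refine ⟨w.sublists.length, ?_⟩
  rintro _ ⟨u, rfl⟩
  exact count_le_length

lemma occ_le_maxocc (w u : List α) : occ w u ≤ maxocc w :=
  le_csSup (bddAbove_occ w) ⟨u, rfl⟩

lemma exists_occ_eq_maxocc (w : List α) : ∃ u, occ w u = maxocc w :=
  Nat.sSup_mem (s := {n | ∃ u, occ w u = n}) ⟨occ w [], [], rfl⟩ (bddAbove_occ w)

lemma maxocc_pos (w : List α) : 0 < maxocc w :=
  (count_pos_iff.2 (mem_sublists.2 (nil_sublist w))).trans_le (occ_le_maxocc w [])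

lemma maxocc_mul_maxocc_le_maxocc_append (w₁ w₂ : List α) :
    maxocc w₁ * maxocc w₂ ≤ maxocc (w₁ ++ w₂) := by
  obtain ⟨u₁, h₁⟩ := exists_occ_eq_maxocc w₁
  obtain ⟨u₂, h₂⟩ := exists_occ_eq_maxocc w₂
  rw [← h₁, ← h₂]
  exact (occ_mul_occ_le_occ_append w₁ w₂ u₁ u₂).trans (occ_le_maxocc _ _)

/-- The subword entropy `S(w) = log₂ (maxocc w)` of a word `w`; its minimum over the words of
length `n` over `Fin k` is `minS k n`. -/
noncomputable def subwordEntropy (w : List α) : ℝ := logb 2 (maxocc w)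

lemma subwordEntropy_nonneg (w : List α) : 0 ≤ subwordEntropy w :=
  logb_nonneg one_lt_two (mod_cast maxocc_pos w)

lemma subwordEntropy_add_le_subwordEntropy_append (w₁ w₂ : List α) :
    subwordEntropy w₁ + subwordEntropy w₂ ≤ subwordEntropy (w₁ ++ w₂) := by
  have h₁ : (0 : ℝ) < maxocc w₁ := mod_cast maxocc_pos w₁
  have h₂ : (0 : ℝ) < maxocc w₂ := mod_cast maxocc_pos w₂
  calc subwordEntropy w₁ + subwordEntropy w₂
      = logb 2 (maxocc w₁ * maxocc w₂) := (logb_mul h₁.ne' h₂.ne').symm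
    _ ≤ subwordEntropy (w₁ ++ w₂) :=
        logb_le_logb_of_le one_lt_two (mul_pos h₁ h₂)
          (mod_cast maxocc_mul_maxocc_le_maxocc_append w₁ w₂)

end Words

lemma minS_length_le_subwordEntropy {k : ℕ} (w : List (Fin k)) :
    minS k w.length ≤ subwordEntropy w := by
  refine csInf_le ⟨0, ?_⟩ ⟨w, rfl, rfl⟩
  rintro _ ⟨v, -, rfl⟩
  exact subwordEntropy_nonneg v

lemma le_minS {k n : ℕ} [NeZero k] {c : ℝ}
    (h : ∀ w : List (Fin k), w.length = n → c ≤ subwordEntropy w) : c ≤ minS k n := by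
  refine le_csInf ⟨_, replicate n 0, length_replicate, rfl⟩ ?_
  rintro _ ⟨w, hw, rfl⟩
  exact h w hw

lemma minS_add_minS_le (k : ℕ) [NeZero k] (m n : ℕ) :
    minS k m + minS k n ≤ minS k (m + n) := by
  refine le_minS fun w hw => ?_
  have htake : (w.take m).length = m := by simp [hw]
  have hdrop : (w.drop m).length = n := by simp [hw]
  calc minS k m + minS k n
      = minS k (w.take m).length + minS k (w.drop m).length := by rw [htake, hdrop]
    _ ≤ subwordEntropy (w.take m) + subwordEntropy (w.drop m) :=
        add_le_add (minS_length_le_subwordEntropy _) (minS_length_le_subwordEntropy _)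
    _ ≤ subwordEntropy (w.take m ++ w.drop m) := subwordEntropy_add_le_subwordEntropy_append _ _
    _ = subwordEntropy w := by rw [take_append_drop]

lemma subadditive_neg_minS (k : ℕ) [NeZero k] : Subadditive fun n => -minS k n := fun m n => by
  linarith [minS_add_minS_le k m n]

lemma le_div_of_subadditive_of_tendsto {u : ℕ → ℝ} (hu : Subadditive u) {l : ℝ}
    (hl : Tendsto (fun n => u n / n) atTop (𝓝 l)) {n : ℕ} (hn : n ≠ 0) : l ≤ u n / n := by
  have hbdd : BddBelow (Set.range fun n => u n / n) := hl.bddBelow_range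
  rw [tendsto_nhds_unique hl (hu.tendsto_lim hbdd)]
  exact hu.lim_le_div hbdd hn

theorem stmt_7 (k : ℕ) (hk : 2 ≤ k) (L : ℝ)
    (hL : Filter.Tendsto (fun n : ℕ => minS k n / n) Filter.atTop (nhds L)) :
    ∀ n : ℕ, 1 ≤ n → L ≥ minS k n / n := by
  intro n hn
  have : NeZero k := ⟨by omega⟩
  have hneg : Tendsto (fun n : ℕ => -minS k n / n) atTop (𝓝 (-L)) := by
    simpa only [neg_div] using hL.neg
  have hle : -L ≤ -minS k n / n :=
    le_div_of_subadditive_of_tendsto (subadditive_neg_minS k) hneg (Nat.one_le_iff_ne_zero.1 hn)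
  rw [neg_div] at hle
  exact neg_le_neg_iff.1 hle
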